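/- (Asymptotic additivity of the energy under translation.) Let d ≥ 1, λ ∈ ℝ, σ > 0, and define the energy functional E(f) = (1/2)∫_{ℝ^d} |∇f(x)|² dx − (λ/(σ+2))∫_{ℝ^d} |f(x)|^{σ+2} dx for f ∈ 𝒮(ℝ^d; ℂ). Then for all u₀, v₀ ∈ 𝒮(ℝ^d; ℂ), E(u₀ + v₀(· − y)) → E(u₀) + E(v₀) as |y| → ∞. In particular, if E(u₀) > 0 and E(v₀) > 0, then there exists D > 0 such that E(u₀ + v₀(· − y)) > 0 for all y ∈ ℝ^d with |y| > D. -/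

import Mathlib

open MeasureTheory Filter
open scoped RealInnerProductSpace

noncomputable section

abbrev Ed (d : ℕ) : Type := EuclideanSpace ℝ (Fin d)

/-- The `i`-th standard basis vector of `ℝ^d`. -/
def stdBasis {d : ℕ} (i : Fin d) : Ed d := EuclideanSpace.single i 1

/-- The `i`-th spatial partial derivative. -/
def pd {d : ℕ} (f : Ed d → ℂ) (i : Fin d) (x : Ed d) : ℂ :=
  fderiv ℝ f x (stdBasis i)

/-- The spatial Laplacian. -/
def lap {d : ℕ} (f : Ed d → ℂ) (x : Ed d) : ℂ :=
  ∑ i, pd (pd f i) i x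

/-- Squared (Euclidean) pointwise norm of the spatial gradient. -/
def gradNormSq {d : ℕ} (f : Ed d → ℂ) (x : Ed d) : ℝ :=
  ∑ i, ‖pd f i x‖ ^ 2

/-- `L²` norm of `f` restricted to a set `s`. -/
def L2On {d : ℕ} (s : Set (Ed d)) (f : Ed d → ℂ) : ℝ :=
  (∫ x in s, ‖f x‖ ^ 2) ^ (1/2 : ℝ)

/-- `L²` norm of `f` on all of `ℝ^d`. -/
def L2 {d : ℕ} (f : Ed d → ℂ) : ℝ :=
  (∫ x, ‖f x‖ ^ 2) ^ (1/2 : ℝ)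

/-- `L²` norm of the spatial gradient of `f`. -/
def gradL2 {d : ℕ} (f : Ed d → ℂ) : ℝ :=
  (∫ x, gradNormSq f x) ^ (1/2 : ℝ)

/-- Distance between two sets. -/
def setDist {d : ℕ} (A B : Set (Ed d)) : ℝ :=
  sInf (Set.image2 dist A B)

/-- A Schwartz solution of the linear Schrödinger equation:
smooth in time-space and `∂ₜ u = i Δ u`. -/
def IsLinSchrodSol (d : ℕ) (u : ℝ → SchwartzMap (Ed d) ℂ) : Prop :=
  ContDiff ℝ (⊤ : ℕ∞) (fun p : ℝ × Ed d => u p.1 p.2) ∧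
  ∀ t x, deriv (fun s => u s x) t = Complex.I * lap (u t) x

/-- A Schwartz solution of the nonlinear Schrödinger equation with parameters `lam, σ`:
smooth in time-space and `∂ₜ u = i (Δ u + lam |u|^σ u)`. -/
def IsNLSSol (d : ℕ) (lam σ : ℝ) (u : ℝ → SchwartzMap (Ed d) ℂ) : Prop :=
  ContDiff ℝ (⊤ : ℕ∞) (fun p : ℝ × Ed d => u p.1 p.2) ∧
  ∀ t x, deriv (fun s => u s x) t =
    Complex.I * (lap (u t) x + ((lam * ‖u t x‖ ^ σ : ℝ) : ℂ) * u t x)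

/-- The energy functional `E(f) = ½∫|∇f|² − (λ/(σ+2))∫|f|^{σ+2}`. -/
def energy {d : ℕ} (lam σ : ℝ) (f : Ed d → ℂ) : ℝ :=
  (1 / 2) * (∫ x, gradNormSq f x) - (lam / (σ + 2)) * ∫ x, ‖f x‖ ^ (σ + 2)

/-!
Two compactly supported functions have disjoint supports once one of them is translated far enough,
and then `∫ ‖f + g(· - y)‖ ^ p` is exactly `∫ ‖f‖ ^ p + ∫ ‖g‖ ^ p`. Translation preserves
`∫ ‖g‖ ^ p`, so approximating general `f, g ∈ L^p` by compactly supported functions gives an error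
uniform in `y`, and the identity survives in the limit `y → ∞`. The energy is a combination of such
integrals: `p = 2` for each partial derivative and `p = σ + 2` for the function itself.
-/

section LpGauge

variable {α E : Type*} [MeasurableSpace α] {μ : Measure α} [NormedAddCommGroup E] {p : ℝ}
  {f g : α → E}

/-- The `L^p` norm for `p ≥ 1`, and its `p`-th power `∫ ‖f‖ ^ p` for `0 < p ≤ 1`. This choice of
exponent makes the triangle inequality hold for every `p > 0`. -/
def lpGauge (p : ℝ) (f : α → E) (μ : Measure α) : ℝ :=
  (∫ x, ‖f x‖ ^ p ∂μ) ^ (max 1 p)⁻¹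

theorem integrable_norm_rpow_of_memLp (hp : 0 < p) (hf : MemLp f (ENNReal.ofReal p) μ) :
    Integrable (fun x => ‖f x‖ ^ p) μ := by
  simpa only [ENNReal.toReal_ofReal hp.le] using
    hf.integrable_norm_rpow (ENNReal.ofReal_pos.2 hp).ne' ENNReal.ofReal_ne_top

theorem integral_norm_rpow_nonneg (p : ℝ) (f : α → E) (μ : Measure α) :
    0 ≤ ∫ x, ‖f x‖ ^ p ∂μ :=
  integral_nonneg fun _ => Real.rpow_nonneg (norm_nonneg _) p

theorem lpGauge_rpow_max_one (p : ℝ) (f : α → E) (μ : Measure α) :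
    lpGauge p f μ ^ max 1 p = ∫ x, ‖f x‖ ^ p ∂μ :=
  Real.rpow_inv_rpow (integral_norm_rpow_nonneg p f μ) (by positivity)

theorem lpGauge_sub_comm (p : ℝ) (f g : α → E) (μ : Measure α) :
    lpGauge p (f - g) μ = lpGauge p (g - f) μ := by
  simp only [lpGauge, Pi.sub_apply, norm_sub_rev]

theorem lpGauge_of_le_one (hp : p ≤ 1) (f : α → E) (μ : Measure α) :
    lpGauge p f μ = ∫ x, ‖f x‖ ^ p ∂μ := by
  rw [lpGauge, max_eq_left hp, inv_one, Real.rpow_one]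

theorem lpGauge_of_one_le (hp : 1 ≤ p) (hf : MemLp f (ENNReal.ofReal p) μ) :
    lpGauge p f μ = (eLpNorm f (ENNReal.ofReal p) μ).toReal := by
  have hp₀ : 0 < p := one_pos.trans_le hp
  rw [hf.eLpNorm_eq_integral_rpow_norm (ENNReal.ofReal_pos.2 hp₀).ne' ENNReal.ofReal_ne_top,
    ENNReal.toReal_ofReal hp₀.le, lpGauge, max_eq_right hp, ENNReal.toReal_ofReal]
  exact Real.rpow_nonneg (integral_norm_rpow_nonneg p f μ) _

theorem lpGauge_add_le (hp : 0 < p) (hf : MemLp f (ENNReal.ofReal p) μ)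
    (hg : MemLp g (ENNReal.ofReal p) μ) :
    lpGauge p (f + g) μ ≤ lpGauge p f μ + lpGauge p g μ := by
  rcases le_total p 1 with hp₁ | hp₁
  · have hfi := integrable_norm_rpow_of_memLp hp hf
    have hgi := integrable_norm_rpow_of_memLp hp hg
    simp only [lpGauge_of_le_one hp₁]
    rw [← integral_add hfi hgi]
    refine integral_mono (integrable_norm_rpow_of_memLp hp (hf.add hg)) (hfi.add hgi) fun x => ?_
    calc ‖f x + g x‖ ^ p ≤ (‖f x‖ + ‖g x‖) ^ p := by gcongr; exact norm_add_le _ _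
      _ ≤ ‖f x‖ ^ p + ‖g x‖ ^ p :=
        Real.rpow_add_le_add_rpow (norm_nonneg _) (norm_nonneg _) hp.le hp₁
  · rw [lpGauge_of_one_le hp₁ (hf.add hg), lpGauge_of_one_le hp₁ hf, lpGauge_of_one_le hp₁ hg,
      ← ENNReal.toReal_add hf.eLpNorm_ne_top hg.eLpNorm_ne_top]
    exact ENNReal.toReal_mono (ENNReal.add_ne_top.2 ⟨hf.eLpNorm_ne_top, hg.eLpNorm_ne_top⟩)
      (eLpNorm_add_le hf.1 hg.1 (ENNReal.one_le_ofReal.2 hp₁))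

theorem abs_lpGauge_sub_lpGauge_le (hp : 0 < p) (hf : MemLp f (ENNReal.ofReal p) μ)
    (hg : MemLp g (ENNReal.ofReal p) μ) :
    |lpGauge p f μ - lpGauge p g μ| ≤ lpGauge p (f - g) μ := by
  have hfg : lpGauge p f μ ≤ lpGauge p (f - g) μ + lpGauge p g μ := by
    simpa only [sub_add_cancel] using lpGauge_add_le hp (hf.sub hg) hg
  have hgf : lpGauge p g μ ≤ lpGauge p (f - g) μ + lpGauge p f μ := by
    simpa only [sub_add_cancel, lpGauge_sub_comm p g f] using lpGauge_add_le hp (hg.sub hf) hf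
  exact abs_sub_le_iff.2 ⟨by linarith, by linarith⟩

theorem tendsto_integral_norm_rpow_of_tendsto_lpGauge_sub {ι : Type*} {l : Filter ι} {F : ι → α → E}
    (hp : 0 < p) (hf : MemLp f (ENNReal.ofReal p) μ) (hF : ∀ i, MemLp (F i) (ENNReal.ofReal p) μ)
    (hF_lim : Tendsto (fun i => lpGauge p (f - F i) μ) l (nhds 0)) :
    Tendsto (fun i => ∫ x, ‖F i x‖ ^ p ∂μ) l (nhds (∫ x, ‖f x‖ ^ p ∂μ)) := by
  have h_gauge : Tendsto (fun i => lpGauge p (F i) μ) l (nhds (lpGauge p f μ)) := by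
    refine tendsto_iff_dist_tendsto_zero.2
      (squeeze_zero (fun _ => dist_nonneg) (fun i => ?_) hF_lim)
    rw [dist_comm]
    exact abs_lpGauge_sub_lpGauge_le hp hf (hF i)
  simpa only [lpGauge_rpow_max_one] using h_gauge.rpow_const (Or.inr (by positivity : 0 ≤ max 1 p))

theorem integral_norm_add_rpow_of_disjoint_support (hp : 0 < p)
    (hf : MemLp f (ENNReal.ofReal p) μ) (hg : MemLp g (ENNReal.ofReal p) μ)
    (hfg : Disjoint f.support g.support) :
    ∫ x, ‖f x + g x‖ ^ p ∂μ = (∫ x, ‖f x‖ ^ p ∂μ) + ∫ x, ‖g x‖ ^ p ∂μ := by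
  rw [← integral_add (integrable_norm_rpow_of_memLp hp hf) (integrable_norm_rpow_of_memLp hp hg)]
  refine integral_congr_ae (Eventually.of_forall fun x => ?_)
  have hx : f x = 0 ∨ g x = 0 := by
    by_contra! hx
    exact Set.disjoint_left.1 hfg hx.1 hx.2
  rcases hx with hx | hx <;> simp [hx, Real.zero_rpow hp.ne']

end LpGauge

section CompactSupport

variable {X E : Type*} [TopologicalSpace X] [NormalSpace X] [R1Space X]
  [WeaklyLocallyCompactSpace X] [MeasurableSpace X] [BorelSpace X] {μ : Measure X} [μ.Regular]
  [NormedAddCommGroup E] [NormedSpace ℝ E] {p : ℝ} {f : X → E}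

theorem exists_seq_hasCompactSupport_tendsto_lpGauge_sub (hp : 0 < p)
    (hf : MemLp f (ENNReal.ofReal p) μ) :
    ∃ F : ℕ → X → E, (∀ n, HasCompactSupport (F n)) ∧ (∀ n, MemLp (F n) (ENNReal.ofReal p) μ) ∧
      Tendsto (fun n => lpGauge p (f - F n) μ) atTop (nhds 0) := by
  choose F hF_supp hF_le _ hF_memLp using fun n : ℕ =>
    hf.exists_hasCompactSupport_integral_rpow_sub_le hp (Nat.one_div_pos_of_nat (α := ℝ) (n := n))
  have hF_integral : Tendsto (fun n => ∫ x, ‖f x - F n x‖ ^ p ∂μ) atTop (nhds 0) :=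
    squeeze_zero (fun n => integral_norm_rpow_nonneg p (f - F n) μ) hF_le
      tendsto_one_div_add_atTop_nhds_zero_nat
  have hr : 0 < (max 1 p)⁻¹ := by positivity
  refine ⟨F, hF_supp, hF_memLp, ?_⟩
  simpa only [Real.zero_rpow hr.ne', lpGauge] using! hF_integral.rpow_const (Or.inr hr.le)

end CompactSupport

section Translation

variable {G E : Type*} [AddGroup G] [MeasurableSpace G] [MeasurableAdd G] {μ : Measure G}
  [μ.IsAddRightInvariant] [NormedAddCommGroup E] {p : ℝ} {f g : G → E}

theorem memLp_translate {q : ENNReal} (hg : MemLp g q μ) (y : G) :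
    MemLp (fun x => g (x - y)) q μ :=
  hg.comp_measurePreserving (measurePreserving_sub_right μ y)

theorem abs_lpGauge_add_translate_sub_le (hp : 0 < p) {f' g' : G → E}
    (hf : MemLp f (ENNReal.ofReal p) μ) (hf' : MemLp f' (ENNReal.ofReal p) μ)
    (hg : MemLp g (ENNReal.ofReal p) μ) (hg' : MemLp g' (ENNReal.ofReal p) μ) (y : G) :
    |lpGauge p (fun x => f x + g (x - y)) μ - lpGauge p (fun x => f' x + g' (x - y)) μ| ≤
      lpGauge p (f - f') μ + lpGauge p (g - g') μ := by
  have h_translate : lpGauge p (fun x => (g - g') (x - y)) μ = lpGauge p (g - g') μ :=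
    congrArg (· ^ (max 1 p)⁻¹) (integral_sub_right_eq_self (fun x => ‖(g - g') x‖ ^ p) y)
  calc
    _ ≤ lpGauge p ((fun x => f x + g (x - y)) - fun x => f' x + g' (x - y)) μ :=
      abs_lpGauge_sub_lpGauge_le hp (hf.add (memLp_translate hg y))
        (hf'.add (memLp_translate hg' y))
    _ = lpGauge p ((f - f') + fun x => (g - g') (x - y)) μ :=
      congrArg (lpGauge p · μ) (funext fun _ => add_sub_add_comm _ _ _ _)
    _ ≤ lpGauge p (f - f') μ + lpGauge p (g - g') μ :=
      h_translate ▸ lpGauge_add_le hp (hf.sub hf') (memLp_translate (hg.sub hg') y)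

end Translation

section TranslationToInfinity

variable {G E : Type*} [AddGroup G] [TopologicalSpace G] [IsTopologicalAddGroup G]

open scoped Pointwise in
theorem eventually_cocompact_disjoint_support_translate [Zero E] {f g : G → E}
    (hf : HasCompactSupport f) (hg : HasCompactSupport g) :
    ∀ᶠ y in cocompact G, Disjoint f.support (fun x => g (x - y)).support := by
  have hK : IsCompact (-tsupport g + tsupport f) := hg.isCompact.neg.add hf.isCompact
  filter_upwards [hK.compl_mem_cocompact] with y hy
  refine Set.disjoint_left.2 fun x hfx hgx => hy ?_
  exact ⟨-(x - y), Set.neg_mem_neg.2 (subset_tsupport g hgx), x, subset_tsupport f hfx, by simp⟩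

variable [MeasurableSpace G] [BorelSpace G] {μ : Measure G} [μ.IsAddRightInvariant]
  [NormedAddCommGroup E] {p : ℝ} {f g : G → E}

theorem tendsto_integral_norm_add_translate_rpow_of_hasCompactSupport (hp : 0 < p)
    (hf : MemLp f (ENNReal.ofReal p) μ) (hg : MemLp g (ENNReal.ofReal p) μ)
    (hf_supp : HasCompactSupport f) (hg_supp : HasCompactSupport g) :
    Tendsto (fun y => ∫ x, ‖f x + g (x - y)‖ ^ p ∂μ) (cocompact G)
      (nhds ((∫ x, ‖f x‖ ^ p ∂μ) + ∫ x, ‖g x‖ ^ p ∂μ)) := by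
  refine tendsto_const_nhds.congr' ?_
  filter_upwards [eventually_cocompact_disjoint_support_translate hf_supp hg_supp] with y hy
  rw [integral_norm_add_rpow_of_disjoint_support hp hf (memLp_translate hg y) hy,
    integral_sub_right_eq_self (fun x => ‖g x‖ ^ p) y]

theorem tendsto_integral_norm_add_translate_rpow [NormalSpace G] [WeaklyLocallyCompactSpace G]
    [μ.Regular] [NormedSpace ℝ E] (hp : 0 < p) (hf : MemLp f (ENNReal.ofReal p) μ)
    (hg : MemLp g (ENNReal.ofReal p) μ) :
    Tendsto (fun y => ∫ x, ‖f x + g (x - y)‖ ^ p ∂μ) (cocompact G)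
      (nhds ((∫ x, ‖f x‖ ^ p ∂μ) + ∫ x, ‖g x‖ ^ p ∂μ)) := by
  obtain ⟨F, hF_supp, hF, hF_lim⟩ := exists_seq_hasCompactSupport_tendsto_lpGauge_sub hp hf
  obtain ⟨H, hH_supp, hH, hH_lim⟩ := exists_seq_hasCompactSupport_tendsto_lpGauge_sub hp hg
  have h_uniform : TendstoUniformly (fun n y => lpGauge p (fun x => F n x + H n (x - y)) μ)
      (fun y => lpGauge p (fun x => f x + g (x - y)) μ) atTop := by
    refine Metric.tendstoUniformly_iff.2 fun ε hε => ?_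
    have h_small := (hF_lim.add hH_lim).eventually (gt_mem_nhds (by simpa using hε))
    filter_upwards [h_small] with n hn y
    exact (abs_lpGauge_add_translate_sub_le hp hf (hF n) hg (hH n) y).trans_lt hn
  have hr : 0 ≤ (max 1 p)⁻¹ := by positivity
  have h_translate (n : ℕ) := (tendsto_integral_norm_add_translate_rpow_of_hasCompactSupport hp
    (hF n) (hH n) (hF_supp n) (hH_supp n)).rpow_const (Or.inr hr)
  have h_approx := ((tendsto_integral_norm_rpow_of_tendsto_lpGauge_sub hp hf hF hF_lim).add
    (tendsto_integral_norm_rpow_of_tendsto_lpGauge_sub hp hg hH hH_lim)).rpow_const (Or.inr hr)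
  have h_gauge :=
    h_uniform.tendsto_of_eventually_tendsto (Eventually.of_forall h_translate) h_approx
  have h_nonneg := add_nonneg (integral_norm_rpow_nonneg p f μ) (integral_norm_rpow_nonneg p g μ)
  have hr' : 0 < max 1 p := by positivity
  simpa only [lpGauge_rpow_max_one, Real.rpow_inv_rpow h_nonneg hr'.ne'] using
    h_gauge.rpow_const (Or.inr hr'.le)

end TranslationToInfinity

section FiniteEnergy

variable {d : ℕ} {σ : ℝ} {f g : Ed d → ℂ}

/-- The differentiable functions for which both integrals in `energy lam σ` converge,
when `σ > -2`. -/
structure HasFiniteEnergy (σ : ℝ) (f : Ed d → ℂ) : Prop where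
  differentiable : Differentiable ℝ f
  memLp_pd : ∀ i, MemLp (pd f i) (ENNReal.ofReal 2)
  memLp : MemLp f (ENNReal.ofReal (σ + 2))

theorem pd_add_translate (hf : Differentiable ℝ f) (hg : Differentiable ℝ g) (i : Fin d)
    (y x : Ed d) : pd (fun x => f x + g (x - y)) i x = pd f i x + pd g i (x - y) := by
  have hg_translate : DifferentiableAt ℝ (fun x => g (x - y)) x :=
    (hg _).comp x (differentiableAt_id.sub_const y)
  rw [pd, fderiv_fun_add (hf x) hg_translate, fderiv_comp_sub]
  rfl

open LineDeriv in
theorem HasFiniteEnergy.of_schwartzMap (σ : ℝ) (f : SchwartzMap (Ed d) ℂ) :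
    HasFiniteEnergy σ f where
  differentiable := f.differentiable
  memLp_pd i := by
    have h_pd : pd f i = (∂_{(stdBasis i : Ed d)} f : SchwartzMap (Ed d) ℂ) :=
      funext fun x => (SchwartzMap.lineDerivOp_apply_eq_fderiv _ f x).symm
    rw [h_pd]
    exact SchwartzMap.memLp _ _ volume
  memLp := f.memLp _

theorem HasFiniteEnergy.add_translate (hf : HasFiniteEnergy σ f) (hg : HasFiniteEnergy σ g)
    (y : Ed d) : HasFiniteEnergy σ (fun x => f x + g (x - y)) where
  differentiable := hf.differentiable.add (hg.differentiable.comp (differentiable_id.sub_const y))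
  memLp_pd i := by
    simp only [funext (pd_add_translate hf.differentiable hg.differentiable i y)]
    exact (hf.memLp_pd i).add (memLp_translate (hg.memLp_pd i) y)
  memLp := hf.memLp.add (memLp_translate hg.memLp y)

theorem HasFiniteEnergy.integral_gradNormSq (hf : HasFiniteEnergy σ f) :
    ∫ x, gradNormSq f x = ∑ i, ∫ x, ‖pd f i x‖ ^ (2 : ℝ) := by
  simp only [gradNormSq, ← Real.rpow_two]
  exact integral_finsetSum _ fun i _ => integrable_norm_rpow_of_memLp two_pos (hf.memLp_pd i)

theorem tendsto_integral_gradNormSq_add_translate (hf : HasFiniteEnergy σ f)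
    (hg : HasFiniteEnergy σ g) :
    Tendsto (fun y : Ed d => ∫ x, gradNormSq (fun x => f x + g (x - y)) x) (cocompact (Ed d))
      (nhds ((∫ x, gradNormSq f x) + ∫ x, gradNormSq g x)) := by
  simp only [fun y => (hf.add_translate hg y).integral_gradNormSq, hf.integral_gradNormSq,
    hg.integral_gradNormSq, pd_add_translate hf.differentiable hg.differentiable,
    ← Finset.sum_add_distrib]
  exact tendsto_finsetSum _ fun i _ =>
    tendsto_integral_norm_add_translate_rpow two_pos (hf.memLp_pd i) (hg.memLp_pd i)

theorem tendsto_energy_add_translate (hσ : -2 < σ) (lam : ℝ) (hf : HasFiniteEnergy σ f)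
    (hg : HasFiniteEnergy σ g) :
    Tendsto (fun y : Ed d => energy lam σ (fun x => f x + g (x - y))) (cocompact (Ed d))
      (nhds (energy lam σ f + energy lam σ g)) := by
  have h_kinetic := (tendsto_integral_gradNormSq_add_translate hf hg).const_mul (1 / 2)
  have h_potential := (tendsto_integral_norm_add_translate_rpow (by linarith : 0 < σ + 2)
    hf.memLp hg.memLp).const_mul (lam / (σ + 2))
  have h_energy : energy lam σ f + energy lam σ g =
      1 / 2 * ((∫ x, gradNormSq f x) + ∫ x, gradNormSq g x) -
        lam / (σ + 2) * ((∫ x, ‖f x‖ ^ (σ + 2)) + ∫ x, ‖g x‖ ^ (σ + 2)) := by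
    unfold energy
    ring
  exact h_energy ▸ h_kinetic.sub h_potential

end FiniteEnergy

theorem exists_forall_lt_norm_of_eventually_comap_norm {E : Type*} [Norm E] {P : E → Prop}
    (hP : ∀ᶠ y in comap (fun y : E => ‖y‖) atTop, P y) :
    ∃ D : ℝ, 0 < D ∧ ∀ y : E, D < ‖y‖ → P y :=
  ((atTop_basis_Ioi' (0 : ℝ)).comap _).eventually_iff.1 hP

theorem energy_asymptotic_additivity_general {d : ℕ} {σ : ℝ} (hσ : -2 < σ) (lam : ℝ)
    {u₀ v₀ : Ed d → ℂ} (hu₀ : HasFiniteEnergy σ u₀) (hv₀ : HasFiniteEnergy σ v₀) :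
    Tendsto (fun y : Ed d => energy lam σ (fun x => u₀ x + v₀ (x - y)))
        (comap (fun y : Ed d => ‖y‖) atTop)
        (nhds (energy lam σ u₀ + energy lam σ v₀)) ∧
      (0 < energy lam σ u₀ → 0 < energy lam σ v₀ →
        ∃ D : ℝ, 0 < D ∧ ∀ y : Ed d, D < ‖y‖ →
          0 < energy lam σ (fun x => u₀ x + v₀ (x - y))) := by
  have h_lim := tendsto_energy_add_translate hσ lam hu₀ hv₀
  rw [← Metric.cobounded_eq_cocompact, ← comap_norm_atTop] at h_lim
  exact ⟨h_lim, fun hu hv => exists_forall_lt_norm_of_eventually_comap_norm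
    (h_lim.eventually (lt_mem_nhds (add_pos hu hv)))⟩

/-- Asymptotic additivity of the energy under translation:
`E(u₀ + v₀(·−y)) → E(u₀) + E(v₀)` as `|y| → ∞`; in particular, if both energies are
positive then the concatenation has positive energy for all sufficiently large `|y|`. -/
theorem energy_asymptotic_additivity
    {d : ℕ} (hd : 1 ≤ d) (lam σ : ℝ) (hσ : 0 < σ)
    (u₀ v₀ : SchwartzMap (Ed d) ℂ) :
    Tendsto (fun y : Ed d => energy lam σ (fun x => u₀ x + v₀ (x - y)))
        (comap (fun y : Ed d => ‖y‖) atTop)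
        (nhds (energy lam σ (⇑u₀) + energy lam σ (⇑v₀))) ∧
      (0 < energy lam σ (⇑u₀) → 0 < energy lam σ (⇑v₀) →
        ∃ D : ℝ, 0 < D ∧ ∀ y : Ed d, D < ‖y‖ →
          0 < energy lam σ (fun x => u₀ x + v₀ (x - y))) :=
  energy_asymptotic_additivity_general (by linarith) lam (.of_schwartzMap σ u₀)
    (.of_schwartzMap σ v₀)
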